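/- Theorem 3.8 (dissipative theories): let h, c : Fin D → ℝ be constant vectors with Σ_μ c μ · h μ = 2, and let U : ℝ → ℝ be smooth satisfying u·U'(u) = 2·U(u) for all u (homogeneity of degree 2). Let φ : (Fin D → ℝ) → ℝ be a smooth solution of the Euler–Lagrange equation of the dissipative Lagrangian density L(x,u,p) = exp(Σ_λ h λ · x λ)·((1/2)·Σ_{μ,ν} η μ ν · p_μ · p_ν − U(u)), i.e. of the PDE □φ x + Σ_μ h μ · ∂^μ φ x + U'(φ x) = 0 for all x. With the (not conserved) tensor T_L^{μν} x := ∂^μ φ x · ∂^ν φ x − η μ ν·((1/2)·Σ_{α,β} η α β·∂_α φ x·∂_β φ x − U(φ x)) and lowered components c_ν := Σ_α η ν α · c α, the current j^μ x := exp(Σ_λ h λ · x λ)·( φ x · ∂^μ φ x + Σ_ν c_ν · T_L^{μν} x ) is conserved: Σ_μ ∂_μ j^μ x = 0 for all x. (The paper's choice is the particular vector written c_ν = 2 h_ν^{-1}; any constant c with Σ_μ c μ · h μ = 2 works.) -/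

import Mathlib

open scoped BigOperators

noncomputable section

/-- Minkowski metric on `Fin D`. -/
def eta (D : ℕ) (μ ν : Fin D) : ℝ :=
  if μ = ν then (if (μ : ℕ) = 0 then 1 else -1) else 0

/-- Spacetime partial derivative `∂_μ F x`. -/
def pd {D : ℕ} (F : (Fin D → ℝ) → ℝ) (μ : Fin D) (x : Fin D → ℝ) : ℝ :=
  fderiv ℝ F x (Pi.single μ 1)

/-- Raised-index partial derivative `∂^μ F x`. -/
def pdu {D : ℕ} (F : (Fin D → ℝ) → ℝ) (μ : Fin D) (x : Fin D → ℝ) : ℝ :=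
  ∑ ν, eta D μ ν * pd F ν x

/-- d'Alembertian `□F x`. -/
def box {D : ℕ} (F : (Fin D → ℝ) → ℝ) (x : Fin D → ℝ) : ℝ :=
  ∑ μ, pd (fun y => pdu F μ y) μ x

def esg {D : ℕ} (μ : Fin D) : ℝ := if (μ : ℕ) = 0 then 1 else -1

lemma esg_sq {D : ℕ} (μ : Fin D) : esg μ * esg μ = 1 := by
  unfold esg; split_ifs <;> norm_num

lemma eta_eq {D : ℕ} (μ ν : Fin D) : eta D μ ν = if μ = ν then esg μ else 0 := rfl

lemma pdu_eq {D : ℕ} (F : (Fin D → ℝ) → ℝ) (μ : Fin D) (x : Fin D → ℝ) :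
    pdu F μ x = esg μ * pd F μ x := by
  simp [pdu, eta_eq]

lemma pd_of_has {D : ℕ} {F : (Fin D → ℝ) → ℝ} {x : Fin D → ℝ} {L : (Fin D → ℝ) →L[ℝ] ℝ}
    (hF : HasFDerivAt F L x) (μ : Fin D) : pd F μ x = L (Pi.single μ 1) := by
  unfold pd; rw [hF.fderiv]

lemma two_le_top' : (2 : WithTop ℕ∞) ≤ ((⊤ : ℕ∞) : WithTop ℕ∞) :=
  WithTop.coe_le_coe.mpr (le_top : (2 : ℕ∞) ≤ ⊤)

lemma pd_diff {D : ℕ} {φ : (Fin D → ℝ) → ℝ} (hφ : ContDiff ℝ (⊤ : ℕ∞) φ) (μ : Fin D) :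
    Differentiable ℝ (fun y => pd φ μ y) := by
  have h1 : ContDiff ℝ 1 (fderiv ℝ φ) :=
    (hφ.of_le (two_le_top')).fderiv_right (by norm_num)
  unfold pd
  exact (h1.differentiable (by norm_num)).clm_apply (differentiable_const _)

lemma pd_symm {D : ℕ} {φ : (Fin D → ℝ) → ℝ} (hφ : ContDiff ℝ (⊤ : ℕ∞) φ) (μ ν : Fin D)
    (x : Fin D → ℝ) : pd (fun y => pd φ μ y) ν x = pd (fun y => pd φ ν y) μ x := by
  have h2 : ContDiff ℝ 2 φ := hφ.of_le two_le_top'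
  have h1 : ContDiff ℝ 1 (fderiv ℝ φ) := h2.fderiv_right (by norm_num)
  have hd : DifferentiableAt ℝ (fderiv ℝ φ) x := h1.differentiable (by norm_num) x
  have key : ∀ a b : Fin D, pd (fun y => pd φ a y) b x
      = fderiv ℝ (fderiv ℝ φ) x (Pi.single b 1) (Pi.single a 1) := by
    intro a b
    have := hd.hasFDerivAt.clm_apply (hasFDerivAt_const (Pi.single a 1 : Fin D → ℝ) x)
    rw [show (fun y => pd φ a y) = fun y => fderiv ℝ φ y (Pi.single a 1) from rfl,
      pd_of_has this]
    simp
  rw [key, key]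
  exact (h2.contDiffAt.isSymmSndFDerivAt (by simp)).eq _ _

lemma current_eq {D : ℕ} (c : Fin D → ℝ) (p : Fin D → ℝ) (μ : Fin D) (V : ℝ) :
    ∑ ν, (∑ α, eta D ν α * c α) *
              (esg μ * p μ * (esg ν * p ν) -
                eta D μ ν * ((1/2) * (∑ α, ∑ β, eta D α β * p α * p β) - V))
    = esg μ * p μ * (∑ ν, c ν * p ν) - c μ * ((1/2) * (∑ α, esg α * (p α * p α)) - V) := by
  have h1 : ∀ ν, ∑ α, eta D ν α * c α = esg ν * c ν := by intro ν; simp [eta_eq]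
  have h2 : ∑ α, ∑ β, eta D α β * p α * p β = ∑ α, esg α * (p α * p α) := by
    simp [eta_eq, mul_assoc]
  simp only [h1, h2, mul_sub, Finset.sum_sub_distrib]
  generalize (1/2) * (∑ α, esg α * (p α * p α)) = K
  have h3 : ∑ ν, esg ν * c ν * (esg μ * p μ * (esg ν * p ν))
      = esg μ * p μ * (∑ ν, c ν * p ν) := by
    rw [Finset.mul_sum]
    refine Finset.sum_congr rfl fun ν _ => ?_
    linear_combination (c ν * p ν * esg μ * p μ) * esg_sq ν
  have h4 : ∀ K : ℝ, ∑ ν, esg ν * c ν * (eta D μ ν * K) = c μ * K := by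
    intro K
    simp only [eta_eq, ite_mul, zero_mul, mul_ite, mul_zero, Finset.sum_ite_eq, Finset.mem_univ,
      if_true]
    linear_combination (c μ * K) * esg_sq μ
  rw [h3, h4, h4]

lemma pd_current {D : ℕ} (h c : Fin D → ℝ) (U : ℝ → ℝ) (hU : Differentiable ℝ U)
    (φ : (Fin D → ℝ) → ℝ) (hφ : Differentiable ℝ φ)
    (hp : ∀ μ, Differentiable ℝ (fun y => pd φ μ y)) (μ : Fin D) (x : Fin D → ℝ) :
    pd (fun y => Real.exp (∑ lam, h lam * y lam) *
      (φ y * (esg μ * pd φ μ y) + (esg μ * pd φ μ y * (∑ ν, c ν * pd φ ν y)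
        - c μ * ((1/2) * (∑ α, esg α * (pd φ α y * pd φ α y)) - U (φ y))))) μ x
    = Real.exp (∑ lam, h lam * x lam) * (h μ *
      (φ x * (esg μ * pd φ μ x) + (esg μ * pd φ μ x * (∑ ν, c ν * pd φ ν x)
        - c μ * ((1/2) * (∑ α, esg α * (pd φ α x * pd φ α x)) - U (φ x))))
      + (pd φ μ x * (esg μ * pd φ μ x) + φ x * (esg μ * pd (fun y => pd φ μ y) μ x)
        + esg μ * pd (fun y => pd φ μ y) μ x * (∑ ν, c ν * pd φ ν x)
        + esg μ * pd φ μ x * (∑ ν, c ν * pd (fun y => pd φ ν y) μ x)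
        - c μ * ((∑ α, esg α * (pd φ α x * pd (fun y => pd φ α y) μ x))
          - deriv U (φ x) * pd φ μ x))) := by
  have P : ∀ a, HasFDerivAt (fun y => pd φ a y) (fderiv ℝ (fun y => pd φ a y) x) x :=
    fun a => (hp a x).hasFDerivAt
  have Ph : HasFDerivAt φ (fderiv ℝ φ x) x := (hφ x).hasFDerivAt
  have E : HasFDerivAt (fun y : Fin D → ℝ => ∑ lam, h lam * y lam)
      (∑ lam, h lam • ContinuousLinearMap.proj (R := ℝ) (φ := fun _ : Fin D => ℝ) lam) x :=
    HasFDerivAt.fun_sum fun a _ => (hasFDerivAt_apply a x).const_mul (h a)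
  have S : HasFDerivAt (fun y => ∑ ν, c ν * pd φ ν y) _ x :=
    HasFDerivAt.fun_sum fun a _ => (P a).const_mul (c a)
  have Q : HasFDerivAt (fun y => ∑ α, esg α * (pd φ α y * pd φ α y)) _ x :=
    HasFDerivAt.fun_sum fun a _ => ((P a).mul (P a)).const_mul (esg a)
  have V := (hU (φ x)).hasDerivAt.comp_hasFDerivAt x Ph
  have T := E.exp.mul ((Ph.mul ((P μ).const_mul (esg μ))).add
    ((((P μ).const_mul (esg μ)).mul S).sub (((Q.const_mul (1/2)).sub V).const_mul (c μ))))
  refine (pd_of_has T μ).trans ?_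
  have hE : ∑ a, h a * (Pi.single μ (1:ℝ) : Fin D → ℝ) a = h μ := by
    simp [Pi.single_apply]
  have hf : ∀ (F : (Fin D → ℝ) → ℝ), fderiv ℝ F x (Pi.single μ 1) = pd F μ x := fun _ => rfl
  have hQ : ∑ α, esg α * (pd φ α x * pd (fun y => pd φ α y) μ x
        + pd φ α x * pd (fun y => pd φ α y) μ x)
      = 2 * ∑ α, esg α * (pd φ α x * pd (fun y => pd φ α y) μ x) := by
    rw [Finset.mul_sum]
    exact Finset.sum_congr rfl fun _ _ => by ring
  simp only [_root_.add_apply, _root_.sub_apply,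
    _root_.smul_apply, _root_.sum_apply, smul_eq_mul,
    ContinuousLinearMap.proj_apply, hE, hf, hQ, Pi.mul_apply, Pi.add_apply, Pi.sub_apply,
    Function.comp_apply]
  ring

/-- Theorem 3.8: conserved current of dissipative theories with a homogeneous
potential of degree 2. -/
theorem dissipative_theory_conserved_current {D : ℕ} (hD : 1 ≤ D)
    (h c : Fin D → ℝ) (hch : ∑ μ, c μ * h μ = 2)
    (U : ℝ → ℝ) (hU : ContDiff ℝ (⊤ : ℕ∞) U)
    (hhom : ∀ u : ℝ, u * deriv U u = 2 * U u)
    (φ : (Fin D → ℝ) → ℝ) (hφ : ContDiff ℝ (⊤ : ℕ∞) φ)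
    (hEL : ∀ x, box φ x + (∑ μ, h μ * pdu φ μ x) + deriv U (φ x) = 0) :
    ∀ x, ∑ μ, pd (fun y =>
        Real.exp (∑ lam, h lam * y lam) *
          (φ y * pdu φ μ y +
            ∑ ν, (∑ α, eta D ν α * c α) *
              (pdu φ μ y * pdu φ ν y -
                eta D μ ν * ((1/2) * (∑ α, ∑ β, eta D α β * pd φ α y * pd φ β y) -
                  U (φ y)))) ) μ x = 0 := by
  intro x
  have hUd : Differentiable ℝ U := hU.differentiable (by simp)
  have hφd : Differentiable ℝ φ := hφ.differentiable (by simp)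
  have hp := pd_diff hφ
  simp only [pdu_eq]
  have hc := fun (μ : Fin D) (y : Fin D → ℝ) => current_eq c (fun a => pd φ a y) μ (U (φ y))
  simp only [hc]
  simp only [pd_current h c U hUd φ hφd hp]
  rw [← Finset.mul_sum]
  refine mul_eq_zero_of_right _ ?_
  have el := hEL x
  have hbox : box φ x = ∑ μ, esg μ * pd (fun y => pd φ μ y) μ x := by
    unfold box
    refine Finset.sum_congr rfl fun μ _ => ?_
    simp only [pdu_eq]
    rw [pd_of_has ((hp μ x).hasFDerivAt.const_mul (esg μ))]
    rfl
  simp only [hbox, pdu_eq] at el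
  have hu := hhom (φ x)
  have hcross : ∑ μ, esg μ * pd φ μ x * (∑ ν, c ν * pd (fun y => pd φ ν y) μ x)
      = ∑ μ, c μ * (∑ α, esg α * (pd φ α x * pd (fun y => pd φ α y) μ x)) := by
    simp only [Finset.mul_sum]
    rw [Finset.sum_comm]
    refine Finset.sum_congr rfl fun μ _ => Finset.sum_congr rfl fun ν _ => ?_
    rw [pd_symm hφ μ ν]; ring
  set S := ∑ ν, c ν * pd φ ν x with hS
  set K := ∑ α, esg α * (pd φ α x * pd φ α x) with hK
  set B := ∑ μ, esg μ * pd (fun y => pd φ μ y) μ x with hB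
  set H := ∑ μ, h μ * (esg μ * pd φ μ x) with hH
  trans (φ x * H + S * H - (∑ μ, c μ * h μ) * ((1/2) * K - U (φ x)) + K + φ x * B + B * S
    + (∑ μ, esg μ * pd φ μ x * (∑ ν, c ν * pd (fun y => pd φ ν y) μ x))
    - (∑ μ, c μ * (∑ α, esg α * (pd φ α x * pd (fun y => pd φ α y) μ x)))
    + deriv U (φ x) * S)
  · have hA : ∃ A : Fin D → ℝ, ∀ μ,
        ∑ α, esg α * (pd φ α x * pd (fun y => pd φ α y) μ x) = A μ := ⟨_, fun _ => rfl⟩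
    have hC : ∃ A : Fin D → ℝ, ∀ μ,
        ∑ ν, c ν * pd (fun y => pd φ ν y) μ x = A μ := ⟨_, fun _ => rfl⟩
    obtain ⟨A, hA⟩ := hA
    obtain ⟨C, hC⟩ := hC
    simp only [hA, hC]
    conv_rhs => rw [hH, hB]
    conv_rhs => arg 2; rw [hS]
    conv_rhs => arg 1; arg 1; arg 1; arg 1; arg 1; arg 2; rw [hK]
    simp only [Finset.mul_sum, Finset.sum_mul, ← Finset.sum_add_distrib, ← Finset.sum_sub_distrib]
    refine Finset.sum_congr rfl fun μ _ => ?_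
    ring
  · rw [hcross, hch]
    linear_combination (φ x + S) * el - hu

end
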